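/- arXiv:1302.1184 — 2 statements merged into one kernel-verified Lean document; each statement's English description precedes it below -/
import Mathlib

section
/- For every extendable de Bruijn density g ∈ D^W_dBe and every i ∈ W, the function α_{W,i}(g) is a density on E^{V+W}: α_{W,i}(g)(ψ) ≥ 0 for all ψ ∈ E^{V+W} and Σ_{ψ ∈ E^{V+W}} α_{W,i}(g)(ψ) = 1. -/
open Finset
open scoped Classical

/-- Patterns over the integer interval `{A,...,B}` with values in `E`. -/
abbrev Pat (E : Type) (A B : ℤ) : Type := {x // x ∈ Finset.Icc A B} → E

/-- Evaluation of a pattern at an integer site (arbitrary value outside the domain). -/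
noncomputable def ev {E : Type} [Nonempty E] {A B : ℤ} (φ : Pat E A B) (j : ℤ) : E :=
  if h : j ∈ Finset.Icc A B then φ ⟨j, h⟩ else Classical.arbitrary E

/-- The window `σ_i(φ)|_V` of a pattern `φ`, a pattern on `V = {-p,...,q}`. -/
noncomputable def win {E : Type} [Nonempty E] (p q : ℕ) {A B : ℤ} (i : ℤ) (φ : Pat E A B) :
    Pat E (-(p : ℤ)) (q : ℤ) :=
  fun v => ev φ (i + v.1)

/-- A density on a finite type: nonnegative weights summing to one. -/
def IsDensity {α : Type} [Fintype α] (g : α → ℝ) : Prop :=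
  (∀ x, 0 ≤ g x) ∧ ∑ x, g x = 1

/-- The distribution associated with a weight function, evaluated on an event. -/
noncomputable def Pr {α : Type} [Fintype α] (g : α → ℝ) (P : α → Prop) : ℝ :=
  ∑ x, if P x then g x else 0

/-- Conditional probability `μ[P | Q] = μ[P ∩ Q]/μ[Q]` (`0` if `0/0`). -/
noncomputable def condPr {α : Type} [Fintype α] (g : α → ℝ) (P Q : α → Prop) : ℝ :=
  Pr g (fun x => P x ∧ Q x) / Pr g Q

/-- The marginalization operator `β_W`. -/
noncomputable def beta {E : Type} [Fintype E] [DecidableEq E] [Nonempty E]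
    (p q : ℕ) (t u : ℤ) (g : Pat E (-(p : ℤ) - t) ((q : ℤ) + u) → ℝ) (i : ℤ)
    (ψ : Pat E (-(p : ℤ)) (q : ℤ)) : ℝ :=
  Pr g (fun χ => win p q i χ = ψ)

/-- The reconstruction operator `α_{W,i}`. -/
noncomputable def alpha {E : Type} [Fintype E] [DecidableEq E] [Nonempty E]
    (p q : ℕ) (t u : ℤ) (g : ℤ → Pat E (-(p : ℤ)) (q : ℤ) → ℝ) (i : ℤ)
    (ψ : Pat E (-(p : ℤ) - t) ((q : ℤ) + u)) : ℝ :=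
  (∏ k ∈ Finset.Icc (-t) (i - 1),
      condPr (g k) (fun χ => ev χ (-(p : ℤ)) = ev ψ (k + -(p : ℤ)))
        (fun χ => ∀ v ∈ Finset.Icc (-(p : ℤ) + 1) (q : ℤ), ev χ v = ev ψ (k + v))) *
    g i (win p q i ψ) *
    (∏ l ∈ Finset.Icc (i + 1) u,
      condPr (g l) (fun χ => ev χ (q : ℤ) = ev ψ (l + (q : ℤ)))
        (fun χ => ∀ v ∈ Finset.Icc (-(p : ℤ)) ((q : ℤ) - 1), ev χ v = ev ψ (l + v)))

/-- Extendable de Bruijn densities. -/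
def Extendable {E : Type} [Fintype E] [DecidableEq E] [Nonempty E]
    (p q : ℕ) (t u : ℤ) (g : ℤ → Pat E (-(p : ℤ)) (q : ℤ) → ℝ) : Prop :=
  ∀ i ∈ Finset.Icc (-t) u, ∀ φ, 0 < g i φ →
    ∃ ψ : Pat E (-(p : ℤ) - t) ((q : ℤ) + u),
      win p q i ψ = φ ∧ ∀ j ∈ Finset.Icc (-t) u, 0 < g j (win p q j ψ)

/-- The event `{χ : χ|_S = ψ|_S}`. -/
def agreeOn {E : Type} [Nonempty E] {A B : ℤ} (S : Finset ℤ) (ψ χ : Pat E A B) : Prop :=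
  ∀ j ∈ S, ev χ j = ev ψ j

/-!
Build a configuration on `V + W` by starting from the window at `i`, with weight `g i`, and
attaching one site at a time, first to the right and then to the left, each with its conditional
probability given the `p + q` neighbouring symbols. Summing over the new symbol multiplies the
weight by `1`, unless the conditioning event is null; there `0 / 0 = 0` would lose mass.
Extendability excludes this: if the weight so far is nonzero, the outermost window lies in the
support of its density, hence its overlap with the next window has positive probability.
So every truncation of `α_{W,i}` has the total mass of `g i`.
-/

section SiteSum

variable {ι M : Type*} {π : ι → Type*} [DecidableEq ι] [∀ j, Fintype (π j)] [AddCommMonoid M]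

/-- The sum of `G` over all ways to overwrite `x` at the sites in `J`: the counting-measure
analogue of `MeasureTheory.lmarginal`. Its arguments are configurations on all of `ι`, so that
sums over different site sets `J` can be compared. -/
def siteSum (x : ∀ j, π j) (J : Finset ι) (G : (∀ j, π j) → M) : M :=
  ∑ φ : ∀ j : J, π j, G (Function.updateFinset x J φ)

lemma siteSum_insert {J : Finset ι} {a : ι} (ha : a ∉ J) (x : ∀ j, π j) (G : (∀ j, π j) → M) :
    siteSum x (insert a J) G = siteSum x J fun f => ∑ e, G (Function.update f a e) := by
  have hJa : Disjoint J {a} := disjoint_singleton_right.2 ha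
  rw [insert_eq, union_comm]
  simp only [siteSum]
  rw [← (Equiv.piFinsetUnion π hJa).sum_comp, Fintype.sum_prod_type]
  refine sum_congr rfl fun φ _ => ?_
  refine Fintype.sum_equiv (Equiv.piUnique fun j : ({a} : Finset ι) => π j) _ _ fun e => ?_
  rw [← Function.updateFinset_updateFinset hJa, Function.updateFinset_singleton]
  rfl

end SiteSum

section FiniteProbability

variable {α : Type} [Fintype α] {g : α → ℝ} {P Q : α → Prop}

lemma Pr_nonneg (hg : ∀ x, 0 ≤ g x) : 0 ≤ Pr g P :=
  sum_nonneg fun x _ => by split_ifs <;> simp [hg]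

lemma Pr_pos (hg : ∀ x, 0 ≤ g x) {x : α} (hx : P x) (hgx : 0 < g x) : 0 < Pr g P :=
  sum_pos' (fun y _ => by split_ifs <;> simp [hg]) ⟨x, mem_univ x, by simpa [hx] using hgx⟩

lemma condPr_nonneg (hg : ∀ x, 0 ≤ g x) : 0 ≤ condPr g P Q :=
  div_nonneg (Pr_nonneg hg) (Pr_nonneg hg)

lemma exists_of_condPr_ne_zero (h : condPr g P Q ≠ 0) : ∃ x, P x ∧ Q x ∧ g x ≠ 0 := by
  contrapose! h
  have hPQ : Pr g (fun x => P x ∧ Q x) = 0 := by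
    refine sum_eq_zero fun x _ => ?_
    split_ifs with hx
    exacts [h x hx.1 hx.2, rfl]
  rw [condPr, hPQ, zero_div]

lemma sum_condPr_eq_one {β : Type*} [Fintype β] (X : α → β) (hQ : Pr g Q ≠ 0) :
    ∑ e, condPr g (fun x => X x = e) Q = 1 := by
  simp only [condPr]
  rw [← sum_div, div_eq_one_iff_eq hQ]
  simp only [Pr]
  rw [sum_comm]
  refine sum_congr rfl fun x _ => ?_
  by_cases hx : Q x <;> simp [hx]

end FiniteProbability

section Patterns

variable {E : Type} {A B : ℤ}

/-- The pattern on `{A,...,B}` seen in the bi-infinite configuration `f` when it is shifted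
by `k`, that is, `σ_k(f)` restricted to `{A,...,B}`. -/
def window (k : ℤ) (f : ℤ → E) : Pat E A B :=
  fun v => f (k + v)

lemma dependsOn_window {k : ℤ} :
    DependsOn (window k : (ℤ → E) → Pat E A B) ((k + ·) '' (Icc A B : Finset ℤ)) :=
  fun _ _ h => funext fun v => h _ ⟨v, v.2, rfl⟩

lemma siteSum_window [Fintype E] (i : ℤ) (x : ℤ → E) (h : Pat E A B → ℝ) :
    siteSum x (Icc (i + A) (i + B)) (fun f => h (window i f)) = ∑ χ, h χ := by
  let shift : Icc A B ≃ Icc (i + A) (i + B) :=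
    (Equiv.addLeft i).subtypeEquiv fun v => by simp
  refine Fintype.sum_equiv (shift.symm.arrowCongr (Equiv.refl E)) _ _ fun ψ => congrArg h ?_
  funext v
  exact dif_pos (shift v).2

variable [Nonempty E]

section AgreesAt

variable {k : ℤ} {S : Finset ℤ} {f : ℤ → E} {χ : Pat E A B}

/-- The event `{χ : χ|_S = σ_k(f)|_S}`, on which the transition probabilities are conditioned. -/
def AgreesAt (S : Finset ℤ) (k : ℤ) (f : ℤ → E) (χ : Pat E A B) : Prop :=
  ∀ v ∈ S, ev χ v = f (k + v)

lemma ev_window {v : ℤ} (hv : v ∈ Icc A B) : ev (window k f : Pat E A B) v = f (k + v) := by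
  simp only [ev, hv, dite_true, window]

lemma AgreesAt.eq_window (h : AgreesAt (Icc A B) k f χ) : χ = window k f := by
  funext ⟨v, hv⟩
  simpa only [ev, hv, dite_true, window] using h v hv

lemma AgreesAt.of_ev_window {d : ℤ} (hS : ∀ v ∈ S, d + v ∈ Icc A B)
    (h : AgreesAt S d (ev (window k f : Pat E A B)) χ) : AgreesAt S (k + d) f χ := by
  intro v hv
  rw [h v hv, ev_window (hS v hv), add_assoc]

lemma dependsOn_agreesAt :
    DependsOn (AgreesAt S k : (ℤ → E) → Pat E A B → Prop) ((k + ·) '' S) :=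
  fun _ _ h => funext fun _ => propext <| forall₂_congr fun v hv => by rw [h _ ⟨v, hv, rfl⟩]

end AgreesAt

variable [Fintype E]

/-- Every pattern in the support of `g` has a continuation in the support of `g'`: one whose
symbols on `S` are those of the given pattern on `d + S`. For `d = ±1` and `S` the overlap of
`{A,...,B}` with its translate by `∓1`, the two patterns are joined by an edge of the de Bruijn
graph. -/
def SuppContinues (g g' : Pat E A B → ℝ) (d : ℤ) (S : Finset ℤ) : Prop :=
  ∀ φ, 0 < g φ → ∃ χ, 0 < g' χ ∧ AgreesAt S d (ev φ) χ

lemma SuppContinues.Pr_agreesAt_pos {g g' : Pat E A B → ℝ} {d k : ℤ} {S : Finset ℤ} {f : ℤ → E}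
    (h : SuppContinues g g' d S) (hg' : ∀ χ, 0 ≤ g' χ) (hS : ∀ v ∈ S, d + v ∈ Icc A B)
    (hf : 0 < g (window k f)) : 0 < Pr g' (AgreesAt S (k + d) f) := by
  obtain ⟨χ, hχ, hagree⟩ := h _ hf
  exact Pr_pos hg' (hagree.of_ev_window hS) hχ

section Extendable

variable [DecidableEq E] {p q : ℕ} {t u : ℤ} {g : ℤ → Pat E (-(p : ℤ)) (q : ℤ) → ℝ}

lemma Extendable.suppContinues (hext : Extendable p q t u g) {k d : ℤ} {S : Finset ℤ}
    (hk : k ∈ Icc (-t) u) (hkd : k + d ∈ Icc (-t) u)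
    (hS : ∀ v ∈ S, v ∈ Icc (-(p : ℤ)) q ∧ d + v ∈ Icc (-(p : ℤ)) q) :
    SuppContinues (g k) (g (k + d)) d S := by
  intro φ hφ
  obtain ⟨ψ, rfl, hψ⟩ := hext k hk φ hφ
  refine ⟨win p q (k + d) ψ, hψ (k + d) hkd, fun v hv => ?_⟩
  change ev (window (k + d) (ev ψ) : Pat E _ _) v = ev (window k (ev ψ) : Pat E _ _) (d + v)
  rw [ev_window (hS v hv).1, ev_window (hS v hv).2, add_assoc]

lemma Extendable.suppContinues_add_one (hext : Extendable p q t u g) {l : ℤ}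
    (hl : l ∈ Ico (-t) u) : SuppContinues (g l) (g (l + 1)) 1 (Icc (-(p : ℤ)) (q - 1)) :=
  hext.suppContinues (by grind) (by grind) (by grind)

lemma Extendable.suppContinues_sub_one (hext : Extendable p q t u g) {k : ℤ}
    (hk : k ∈ Ioc (-t) u) : SuppContinues (g k) (g (k - 1)) (-1) (Icc (-(p : ℤ) + 1) q) :=
  hext.suppContinues (by grind) (by grind) (by grind)

end Extendable

section Transition

variable {g : Pat E A B → ℝ} {k s : ℤ} {S : Finset ℤ} {f : ℤ → E}

/-- The conditional probability under `g` of the symbol of `σ_k(f)` at `s`, given its symbols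
on `S`. -/
noncomputable def transition (g : Pat E A B → ℝ) (k : ℤ) (S : Finset ℤ) (s : ℤ)
    (f : ℤ → E) : ℝ :=
  condPr g (fun χ => ev χ s = f (k + s)) (AgreesAt S k f)

lemma transition_nonneg (hg : ∀ χ, 0 ≤ g χ) : 0 ≤ transition g k S s f :=
  condPr_nonneg hg

lemma dependsOn_transition : DependsOn (transition g k S s) ((k + ·) '' insert s S) := by
  intro f f' h
  have hS : AgreesAt S k f = (AgreesAt S k f' : Pat E A B → Prop) :=
    dependsOn_agreesAt.mono (Set.image_mono (Set.subset_insert _ _)) h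
  rw [transition, transition, hS, h _ ⟨s, Set.mem_insert _ _, rfl⟩]

lemma apply_window_pos_of_transition_ne_zero (hg : ∀ χ, 0 ≤ g χ) (hS : insert s S = Icc A B)
    (h : transition g k S s f ≠ 0) : 0 < g (window k f) := by
  obtain ⟨χ, hs, hagree, hχ⟩ := exists_of_condPr_ne_zero h
  have hwindow : AgreesAt (Icc A B) k f χ := hS ▸ (forall_mem_insert _ _ _).2 ⟨hs, hagree⟩
  rw [← hwindow.eq_window]
  exact (hg χ).lt_of_ne' hχ

lemma transition_update (hs : s ∉ S) (e : E) :
    transition g k S s (Function.update f (k + s) e) =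
      condPr g (fun χ => ev χ s = e) (AgreesAt S k f) := by
  have hS : AgreesAt S k (Function.update f (k + s) e) = (AgreesAt S k f : Pat E A B → Prop) := by
    refine dependsOn_agreesAt ?_
    rintro _ ⟨v, hv, rfl⟩
    exact Function.update_of_ne (fun h => hs ((add_right_injective k h : v = s) ▸ hv)) _ _
  rw [transition, hS, Function.update_self]

lemma siteSum_insert_mul_transition {J : Finset ℤ} {F : (ℤ → E) → ℝ} (x : ℤ → E) (hs : s ∉ S)
    (hJ : k + s ∉ J) (hF : DependsOn F J) (hpos : ∀ f, F f ≠ 0 → 0 < Pr g (AgreesAt S k f)) :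
    siteSum x (insert (k + s) J) (fun f => F f * transition g k S s f) = siteSum x J F := by
  rw [siteSum_insert hJ]
  congr 1
  funext f
  have hF_update : ∀ e, F (Function.update f (k + s) e) = F f := fun e =>
    hF fun j hj => Function.update_of_ne (ne_of_mem_of_not_mem hj hJ) _ _
  simp only [hF_update, transition_update hs]
  rw [← mul_sum]
  by_cases hf : F f = 0
  · rw [hf, zero_mul]
  · rw [sum_condPr_eq_one _ (hpos f hf).ne', mul_one]

end Transition

section PartialAlpha

variable {g : ℤ → Pat E A B → ℝ} {i a b : ℤ}

/-- The reconstruction `α_{{a,...,b},i}(g)`, read off a bi-infinite configuration. -/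
noncomputable def partialAlpha (g : ℤ → Pat E A B → ℝ) (i a b : ℤ) (f : ℤ → E) : ℝ :=
  (∏ k ∈ Icc a (i - 1), transition (g k) k (Icc (A + 1) B) A f) * g i (window i f) *
    ∏ l ∈ Icc (i + 1) b, transition (g l) l (Icc A (B - 1)) B f

lemma partialAlpha_nonneg (hai : a ≤ i) (hib : i ≤ b) (hg : ∀ j ∈ Icc a b, ∀ χ, 0 ≤ g j χ)
    (f : ℤ → E) : 0 ≤ partialAlpha g i a b f := by
  refine mul_nonneg (mul_nonneg (prod_nonneg fun k hk => transition_nonneg (hg k ?_))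
    (hg i (mem_Icc.2 ⟨hai, hib⟩) _)) (prod_nonneg fun l hl => transition_nonneg (hg l ?_))
  all_goals grind

lemma partialAlpha_add_one (hib : i ≤ b) (f : ℤ → E) :
    partialAlpha g i a (b + 1) f =
      partialAlpha g i a b f * transition (g (b + 1)) (b + 1) (Icc A (B - 1)) B f := by
  simp only [partialAlpha]
  rw [← insert_Icc_right_eq_Icc_add_one (by omega), prod_insert (by simp)]
  ring

lemma partialAlpha_sub_one (hai : a ≤ i) (f : ℤ → E) :
    partialAlpha g i (a - 1) b f =
      partialAlpha g i a b f * transition (g (a - 1)) (a - 1) (Icc (A + 1) B) A f := by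
  simp only [partialAlpha]
  rw [← insert_Icc_left_eq_Icc_sub_one (by omega), prod_insert (by simp)]
  ring

lemma dependsOn_partialAlpha (hAB : A ≤ B) (hai : a ≤ i) (hib : i ≤ b) :
    DependsOn (partialAlpha g i a b) (Icc (a + A) (b + B) : Finset ℤ) := by
  intro f f' h
  have hwindow : (window i f : Pat E A B) = window i f' := by
    refine dependsOn_window.mono ?_ h
    rintro _ ⟨v, hv, rfl⟩
    simp only [coe_Icc, Set.mem_Icc] at *
    omega
  simp only [partialAlpha]
  rw [hwindow]
  congrm ?_ * _ * ?_
  all_goals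
    refine prod_congr rfl fun k hk => dependsOn_transition.mono ?_ h
    rintro _ ⟨v, hv, rfl⟩
    simp only [mem_Icc, coe_Icc, Set.mem_insert_iff, Set.mem_Icc] at *
    omega

lemma apply_window_pos_of_partialAlpha_ne_zero (hAB : A ≤ B) {j : ℤ} (hj : j ∈ Icc a b)
    (hg : ∀ χ, 0 ≤ g j χ) {f : ℤ → E} (h : partialAlpha g i a b f ≠ 0) :
    0 < g j (window j f) := by
  obtain ⟨haj, hjb⟩ := mem_Icc.1 hj
  simp only [partialAlpha, mul_ne_zero_iff] at h
  obtain ⟨⟨hleft, hcenter⟩, hright⟩ := h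
  rcases lt_trichotomy j i with hji | rfl | hij
  · exact apply_window_pos_of_transition_ne_zero hg (insert_Icc_add_one_left_eq_Icc hAB)
      (prod_ne_zero_iff.1 hleft j (mem_Icc.2 ⟨haj, by omega⟩))
  · exact (hg _).lt_of_ne' hcenter
  · exact apply_window_pos_of_transition_ne_zero hg (insert_Icc_sub_one_right_eq_Icc hAB)
      (prod_ne_zero_iff.1 hright j (mem_Icc.2 ⟨by omega, hjb⟩))

lemma siteSum_partialAlpha_add_one (hAB : A ≤ B) (x : ℤ → E) (hai : a ≤ i) (hib : i ≤ b)
    (hgb : ∀ χ, 0 ≤ g b χ) (hgb' : ∀ χ, 0 ≤ g (b + 1) χ)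
    (hcont : SuppContinues (g b) (g (b + 1)) 1 (Icc A (B - 1))) :
    siteSum x (Icc (a + A) (b + 1 + B)) (partialAlpha g i a (b + 1)) =
      siteSum x (Icc (a + A) (b + B)) (partialAlpha g i a b) := by
  have hsites : Icc (a + A) (b + 1 + B) = insert (b + 1 + B) (Icc (a + A) (b + B)) := by
    rw [add_right_comm, insert_Icc_right_eq_Icc_add_one (by omega)]
  rw [hsites, funext (partialAlpha_add_one hib)]
  refine siteSum_insert_mul_transition x (by simp) (by simp) (dependsOn_partialAlpha hAB hai hib)
    fun f hf => ?_
  exact hcont.Pr_agreesAt_pos hgb' (by grind)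
    (apply_window_pos_of_partialAlpha_ne_zero hAB (by grind) hgb hf)

lemma siteSum_partialAlpha_sub_one (hAB : A ≤ B) (x : ℤ → E) (hai : a ≤ i) (hib : i ≤ b)
    (hga : ∀ χ, 0 ≤ g a χ) (hga' : ∀ χ, 0 ≤ g (a - 1) χ)
    (hcont : SuppContinues (g a) (g (a - 1)) (-1) (Icc (A + 1) B)) :
    siteSum x (Icc (a - 1 + A) (b + B)) (partialAlpha g i (a - 1) b) =
      siteSum x (Icc (a + A) (b + B)) (partialAlpha g i a b) := by
  have hsites : Icc (a - 1 + A) (b + B) = insert (a - 1 + A) (Icc (a + A) (b + B)) := by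
    rw [sub_add_eq_add_sub, insert_Icc_left_eq_Icc_sub_one (by omega)]
  rw [hsites, funext (partialAlpha_sub_one hai)]
  refine siteSum_insert_mul_transition x (by simp) (by simp) (dependsOn_partialAlpha hAB hai hib)
    fun f hf => ?_
  exact hcont.Pr_agreesAt_pos hga' (by grind)
    (apply_window_pos_of_partialAlpha_ne_zero hAB (by grind) hga hf)

lemma siteSum_partialAlpha_right (hAB : A ≤ B) (x : ℤ → E) (hib : i ≤ b)
    (hg : ∀ j ∈ Icc i b, ∀ χ, 0 ≤ g j χ)
    (hright : ∀ l ∈ Ico i b, SuppContinues (g l) (g (l + 1)) 1 (Icc A (B - 1))) :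
    siteSum x (Icc (i + A) (b + B)) (partialAlpha g i i b) = ∑ χ, g i χ := by
  induction b, hib using Int.leInduction with
  | base =>
    rw [← siteSum_window i x]
    congr 1
    funext f
    simp [partialAlpha]
  | succ b hib ih =>
    rw [siteSum_partialAlpha_add_one hAB x le_rfl hib (hg b (by grind))
      (hg (b + 1) (by grind)) (hright b (by grind))]
    exact ih (fun j hj => hg j (Icc_subset_Icc_right (by omega) hj))
      fun l hl => hright l (Ico_subset_Ico_right (by omega) hl)

lemma siteSum_partialAlpha (hAB : A ≤ B) (x : ℤ → E) (hai : a ≤ i) (hib : i ≤ b)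
    (hg : ∀ j ∈ Icc a b, ∀ χ, 0 ≤ g j χ)
    (hright : ∀ l ∈ Ico i b, SuppContinues (g l) (g (l + 1)) 1 (Icc A (B - 1)))
    (hleft : ∀ k ∈ Ioc a i, SuppContinues (g k) (g (k - 1)) (-1) (Icc (A + 1) B)) :
    siteSum x (Icc (a + A) (b + B)) (partialAlpha g i a b) = ∑ χ, g i χ := by
  induction a, hai using Int.leInductionDown with
  | base => exact siteSum_partialAlpha_right hAB x hib hg hright
  | pred a hai ih =>
    rw [siteSum_partialAlpha_sub_one hAB x hai hib (hg a (by grind))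
      (hg (a - 1) (by grind)) (hleft a (by grind))]
    exact ih (fun j hj => hg j (Icc_subset_Icc_left (by omega) hj))
      fun k hk => hleft k (Ioc_subset_Ioc_left (by omega) hk)

end PartialAlpha

theorem stmt_3_general [DecidableEq E] (p q : ℕ) (t u : ℤ)
    (g : ℤ → Pat E (-(p : ℤ)) (q : ℤ) → ℝ) (hg : ∀ j ∈ Icc (-t) u, ∀ χ, 0 ≤ g j χ)
    (i : ℤ) (hi : i ∈ Icc (-t) u) (hgi : ∑ χ, g i χ = 1)
    (hright : ∀ l ∈ Ico i u, SuppContinues (g l) (g (l + 1)) 1 (Icc (-(p : ℤ)) (q - 1)))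
    (hleft : ∀ k ∈ Ioc (-t) i, SuppContinues (g k) (g (k - 1)) (-1) (Icc (-(p : ℤ) + 1) q)) :
    IsDensity (alpha p q t u g i) := by
  obtain ⟨hti, hiu⟩ := mem_Icc.1 hi
  refine ⟨fun ψ => partialAlpha_nonneg hti hiu hg (ev ψ), ?_⟩
  change siteSum (fun _ => Classical.arbitrary E) (Icc (-(p : ℤ) - t) (q + u))
    (partialAlpha g i (-t) u) = 1
  rw [← neg_add_eq_sub, add_comm (q : ℤ),
    siteSum_partialAlpha (by omega) _ hti hiu hg hright hleft, hgi]

end Patterns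

/-- `α_{W,i}` of an extendable de Bruijn density is a density. -/
theorem stmt_3
    (E : Type) [Fintype E] [DecidableEq E] [Nonempty E]
    (p q : ℕ) (t u : ℤ) (htu : -t ≤ u)
    (g : ℤ → Pat E (-(p : ℤ)) (q : ℤ) → ℝ)
    (hgd : ∀ j ∈ Finset.Icc (-t) u, IsDensity (g j))
    (hext : Extendable p q t u g)
    (i : ℤ) (hi : i ∈ Finset.Icc (-t) u) :
    IsDensity (alpha p q t u g i) :=
  stmt_3_general p q t u g (fun j hj => (hgd j hj).1) i hi (hgd i hi).2
    (fun _ hl => hext.suppContinues_add_one (Ico_subset_Ico_left (mem_Icc.1 hi).1 hl))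
    fun _ hk => hext.suppContinues_sub_one (Ioc_subset_Ioc_right (mem_Icc.1 hi).2 hk)
end

section
/- Site independence of reconstruction on the image of β_W: if g ∈ (D(E^V))^W lies in the image of β_W, i.e. g = β_W(g̃) for some density g̃ on E^{V+W}, then α_{W,i}(g) = α_{W,j}(g) for all i, j ∈ W. -/
open Finset
open scoped Classical

/-!
If consecutive weights `g k` and `g (k + 1)` have the same marginal `D k` on the sites shared by
their windows, each factor of `alpha` is a quotient `g k (win p q k ψ) / D`, with `D = D k` to the
left of `i` and `D = D (k - 1)` to the right of it. So
`alpha p q t u g i ψ = (∏ k ∈ Icc (-t) u, g k (win p q k ψ)) / ∏ k ∈ Ico (-t) u, D k`,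
which does not involve `i`.
-/

section Pr

variable {α β : Type} [Fintype α] [Fintype β]

lemma Pr_congr (g : α → ℝ) {P Q : α → Prop} (h : ∀ x, P x ↔ Q x) : Pr g P = Pr g Q :=
  congrArg (Pr g) (funext fun x => propext (h x))

lemma Pr_eq_apply (g : α → ℝ) (a : α) : Pr g (fun x => x = a) = g a := by
  simp [Pr]

lemma Pr_pushforward (g : α → ℝ) (f : α → β) (P : β → Prop) :
    Pr (fun y => Pr g fun x => f x = y) P = Pr g fun x => P (f x) := by
  simp only [Pr, ← Finset.sum_filter]
  exact (sum_fiberwise_eq_sum_filter univ (univ.filter P) f g).trans (by simp)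

end Pr

lemma prod_Icc_div_mul_mul_prod_Icc_div {G : Type*} [DivisionCommMonoid G] (N D : ℤ → G)
    {a b i : ℤ} (hi : i ∈ Icc a b) :
    (∏ k ∈ Icc a (i - 1), N k / D k) * N i * ∏ k ∈ Icc (i + 1) b, N k / D (k - 1) =
      (∏ k ∈ Icc a b, N k) / ∏ k ∈ Ico a b, D k := by
  obtain ⟨hai, hib⟩ := mem_Icc.1 hi
  have hN : ∏ k ∈ Icc a b, N k =
      (∏ k ∈ Icc a (i - 1), N k) * (N i * ∏ k ∈ Icc (i + 1) b, N k) := by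
    rw [Icc_add_one_left_eq_Ioc, mul_prod_Ioc_eq_prod_Icc hib, Icc_sub_one_right_eq_Ico,
      ← Ico_add_one_right_eq_Icc i, ← Ico_add_one_right_eq_Icc a,
      ← prod_union (Ico_disjoint_Ico_consecutive a i (b + 1)),
      Ico_union_Ico_eq_Ico hai (by omega)]
  have hD : ∏ k ∈ Ico a b, D k =
      (∏ k ∈ Icc a (i - 1), D k) * ∏ k ∈ Icc (i + 1) b, D (k - 1) := by
    rw [← Ico_add_one_right_eq_Icc (i + 1), prod_Ico_add_right_sub_eq, Icc_sub_one_right_eq_Ico,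
      ← prod_union (Ico_disjoint_Ico_consecutive a i b), Ico_union_Ico_eq_Ico hai hib]
  rw [prod_div_distrib, prod_div_distrib, hN, hD, div_mul_eq_mul_div, div_mul_div_comm, mul_assoc]

section Pattern

variable {E : Type} [Nonempty E]

lemma ev_eq_of_mem {A B v : ℤ} (φ : Pat E A B) (hv : v ∈ Icc A B) : ev φ v = φ ⟨v, hv⟩ :=
  dif_pos hv

lemma ev_win {p q : ℕ} {v : ℤ} (hv : v ∈ Icc (-(p : ℤ)) (q : ℤ)) {A B : ℤ} (i : ℤ)
    (φ : Pat E A B) : ev (win p q i φ) v = ev φ (i + v) :=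
  ev_eq_of_mem _ hv

lemma forall_ev_eq_iff {A B : ℤ} (χ : Pat E A B) (w : ℤ → E) :
    (∀ v ∈ Icc A B, ev χ v = w v) ↔ χ = fun v => w v.1 := by
  simp +contextual only [funext_iff, Subtype.forall, ev_eq_of_mem]

variable [Fintype E]

/-- The probability under `g` of agreeing with the configuration `w` on the sites in `S`. For
`S = V_+` and `S = V_-` these are the conditioning events in `alpha`. -/
noncomputable def marginal {A B : ℤ} (S : Finset ℤ) (g : Pat E A B → ℝ) (w : ℤ → E) : ℝ :=
  Pr g fun χ => ∀ v ∈ S, ev χ v = w v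

lemma condPr_ev_eq_div_marginal {A B a : ℤ} {S : Finset ℤ} (hS : insert a S = Icc A B)
    (g : Pat E A B → ℝ) (w : ℤ → E) :
    condPr g (fun χ => ev χ a = w a) (fun χ => ∀ v ∈ S, ev χ v = w v) =
      g (fun v => w v.1) / marginal S g w := by
  have h_inter (χ : Pat E A B) :
      (ev χ a = w a ∧ ∀ v ∈ S, ev χ v = w v) ↔ χ = fun v => w v.1 := by
    rw [← forall_ev_eq_iff, ← hS, forall_mem_insert]
  rw [condPr, Pr_congr g h_inter, Pr_eq_apply, marginal]

end Pattern

section Reconstruction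

variable {E : Type} [Fintype E] [Nonempty E] {p q : ℕ} {t u : ℤ}

/-- The de Bruijn condition on a family of weights over the windows `k + V` with `-t ≤ k ≤ u`:
`g k` and `g (k + 1)` have the same marginal on the overlap `(k + V) ∩ (k + 1 + V)`, which is
`k + V_+ = k + 1 + V_-`. -/
def OverlapConsistent (p q : ℕ) (t u : ℤ) (g : ℤ → Pat E (-(p : ℤ)) (q : ℤ) → ℝ) : Prop :=
  ∀ k ∈ Ico (-t) u, ∀ w : ℤ → E,
    marginal (Icc (-(p : ℤ) + 1) q) (g k) (fun v => w (k + v)) =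
      marginal (Icc (-(p : ℤ)) (q - 1)) (g (k + 1)) (fun v => w (k + 1 + v))

lemma OverlapConsistent.congr {g g' : ℤ → Pat E (-(p : ℤ)) (q : ℤ) → ℝ}
    (hg' : OverlapConsistent p q t u g') (h : ∀ k ∈ Icc (-t) u, g k = g' k) :
    OverlapConsistent p q t u g := by
  intro k hk w
  obtain ⟨htk, hku⟩ := mem_Ico.1 hk
  rw [h k (mem_Icc.2 ⟨htk, hku.le⟩), h (k + 1) (mem_Icc.2 ⟨by omega, hku⟩), hg' k hk w]

variable [DecidableEq E]

lemma marginal_beta {S : Finset ℤ} (hS : S ⊆ Icc (-(p : ℤ)) q)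
    (gtil : Pat E (-(p : ℤ) - t) ((q : ℤ) + u) → ℝ) (i : ℤ) (w : ℤ → E) :
    marginal S (beta p q t u gtil i) (fun v => w (i + v)) =
      marginal (S.image (i + ·)) gtil w := by
  unfold marginal
  refine (Pr_pushforward gtil (win p q i) _).trans (Pr_congr gtil fun χ => ?_)
  rw [forall_mem_image]
  exact forall₂_congr fun v hv => by rw [ev_win (hS hv)]

lemma overlapConsistent_beta (gtil : Pat E (-(p : ℤ) - t) ((q : ℤ) + u) → ℝ) :
    OverlapConsistent p q t u (beta p q t u gtil) := by
  intro k _ w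
  rw [marginal_beta (Icc_subset_Icc_left (by omega)),
    marginal_beta (Icc_subset_Icc_right (by omega)), image_add_left_Icc, image_add_left_Icc]
  congr 2 <;> ring

lemma alpha_eq_prod_div_marginal (g : ℤ → Pat E (-(p : ℤ)) (q : ℤ) → ℝ) (i : ℤ)
    (ψ : Pat E (-(p : ℤ) - t) ((q : ℤ) + u)) :
    alpha p q t u g i ψ =
      (∏ k ∈ Icc (-t) (i - 1), g k (win p q k ψ) /
        marginal (Icc (-(p : ℤ) + 1) q) (g k) (fun v => ev ψ (k + v))) *
      g i (win p q i ψ) *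
      ∏ l ∈ Icc (i + 1) u, g l (win p q l ψ) /
        marginal (Icc (-(p : ℤ)) (q - 1)) (g l) (fun v => ev ψ (l + v)) := by
  have hpq : -(p : ℤ) ≤ q := by omega
  unfold alpha
  congr! 3 with k _ l _
  · exact condPr_ev_eq_div_marginal (insert_Icc_add_one_left_eq_Icc hpq) (g k)
      fun v => ev ψ (k + v)
  · exact condPr_ev_eq_div_marginal (insert_Icc_sub_one_right_eq_Icc hpq) (g l)
      fun v => ev ψ (l + v)

lemma OverlapConsistent.alpha_eq_prod_div_prod {g : ℤ → Pat E (-(p : ℤ)) (q : ℤ) → ℝ}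
    (hg : OverlapConsistent p q t u g) {i : ℤ} (hi : i ∈ Icc (-t) u)
    (ψ : Pat E (-(p : ℤ) - t) ((q : ℤ) + u)) :
    alpha p q t u g i ψ =
      (∏ k ∈ Icc (-t) u, g k (win p q k ψ)) /
        ∏ k ∈ Ico (-t) u,
          marginal (Icc (-(p : ℤ) + 1) q) (g k) (fun v => ev ψ (k + v)) := by
  rw [alpha_eq_prod_div_marginal, ← prod_Icc_div_mul_mul_prod_Icc_div _ _ hi]
  refine congrArg _ (prod_congr rfl fun l hl => ?_)
  have hl' : l - 1 ∈ Ico (-t) u := by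
    rw [mem_Icc] at hi hl
    exact mem_Ico.2 (by omega)
  rw [hg (l - 1) hl' (ev ψ), sub_add_cancel]

end Reconstruction

theorem stmt_5_general
    {E : Type} [Fintype E] [DecidableEq E] [Nonempty E] {p q : ℕ} {t u : ℤ}
    {g : ℤ → Pat E (-(p : ℤ)) (q : ℤ) → ℝ} (hg : OverlapConsistent p q t u g)
    {i j : ℤ} (hi : i ∈ Icc (-t) u) (hj : j ∈ Icc (-t) u) :
    alpha p q t u g i = alpha p q t u g j :=
  funext fun ψ => (hg.alpha_eq_prod_div_prod hi ψ).trans (hg.alpha_eq_prod_div_prod hj ψ).symm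

/-- site independence of the reconstruction on the image of `β_W`. -/
theorem stmt_5
    (E : Type) [Fintype E] [DecidableEq E] [Nonempty E]
    (p q : ℕ) (t u : ℤ) (htu : -t ≤ u)
    (gtil : Pat E (-(p : ℤ) - t) ((q : ℤ) + u) → ℝ) (hgtil : IsDensity gtil)
    (g : ℤ → Pat E (-(p : ℤ)) (q : ℤ) → ℝ)
    (hg : ∀ j ∈ Finset.Icc (-t) u, g j = beta p q t u gtil j)
    (i : ℤ) (hi : i ∈ Finset.Icc (-t) u) (j : ℤ) (hj : j ∈ Finset.Icc (-t) u) :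
    alpha p q t u g i = alpha p q t u g j :=
  stmt_5_general ((overlapConsistent_beta gtil).congr hg) hi hj
end
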